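/- Under the observer setup, fix a real γ > 0 and define β ∈ ℝ^{n_y} by β_i = γ·((S_n)_{ii})⁻². There exist an n×n_y real matrix L and an n×n real symmetric positive definite matrix X such that the block matrix [[(X·(A+L·C_y)) + (X·(A+L·C_y))ᵀ + C_zᵀ·C_z, X·(B_w̄ + L·D_w̄)], [(B_w̄ + L·D_w̄)ᵀ·X, -γ²·I_{n_d+n_y}]] is negative definite, if and only if there exist an n×n real symmetric positive definite matrix X' and an n×n_y real matrix Y' such that the block matrix [[(X'·A + Y'·C_y) + (X'·A + Y'·C_y)ᵀ, X'·B_d·S_d + Y'·D_d·S_d, C_zᵀ, Y'], [(X'·B_d·S_d + Y'·D_d·S_d)ᵀ, -γ·I_{n_d}, 0, 0], [C_z, 0, -γ·I_{n_z}, 0], [Y'ᵀ, 0, 0, -diag(β)]] is negative definite. Moreover, in this case L = X'⁻¹·Y' gives a valid correspondence between the two feasibility sets. -/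

import Mathlib

open Matrix

/-- A real symmetric matrix `M` is negative definite if `xᵀ M x < 0` for all `x ≠ 0`. -/
def NegDef {n : Type*} [Fintype n] (M : Matrix n n ℝ) : Prop :=
  M.IsSymm ∧ ∀ x : n → ℝ, x ≠ 0 → x ⬝ᵥ M.mulVec x < 0

/-!
Eliminating all blocks but the first by Schur complements turns the bounded-real inequality for
`(γX, L)` and the LMI for `(X, XL)` into Riccati inequalities in one and the same matrix, up to
the factor `γ`. The weight `γ(SSᵀ)⁻¹`, which is `diag β` when `S = S_n`, is what makes the
noise term `(XLS)(XLS)ᵀ` of the former appear, scaled by `γ⁻¹`, in the latter.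
-/

section SchurComplement

variable {R : Type*} [CommRing R] [PartialOrder R] [StarRing R] [StarOrderedRing R]
variable {m n : Type*} [Finite m]

theorem posDef_fromBlocks_zero_zero_iff [Finite n] {A : Matrix m m R} {D : Matrix n n R} :
    (fromBlocks A 0 0 D).PosDef ↔ A.PosDef ∧ D.PosDef := by
  refine ⟨fun h => ⟨h.submatrix Sum.inl_injective, h.submatrix Sum.inr_injective⟩, ?_⟩
  rintro ⟨hA, hD⟩
  have := Fintype.ofFinite m
  have := Fintype.ofFinite n
  refine .of_dotProduct_mulVec_pos (hA.isHermitian.fromBlocks (by simp) hD.isHermitian)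
    fun x hx => ?_
  obtain ⟨u, v, rfl⟩ : ∃ u v, x = Sum.elim u v := ⟨_, _, (Sum.elim_comp_inl_inr x).symm⟩
  have expand : star (Sum.elim u v) ⬝ᵥ (fromBlocks A 0 0 D *ᵥ Sum.elim u v) =
      star u ⬝ᵥ (A *ᵥ u) + star v ⬝ᵥ (D *ᵥ v) := by
    simp [Function.star_sumElim, fromBlocks_mulVec]
  rw [expand]
  by_cases hu : u = 0
  · have hv : v ≠ 0 := by
      rintro rfl
      exact hx (by simp [hu])
    exact add_pos_of_nonneg_of_pos (hA.posSemidef.dotProduct_mulVec_nonneg u)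
      (hD.dotProduct_mulVec_pos hv)
  · exact add_pos_of_pos_of_nonneg (hA.dotProduct_mulVec_pos hu)
      (hD.posSemidef.dotProduct_mulVec_nonneg v)

theorem posDef_fromBlocks_iff_schur [Fintype n] [DecidableEq n] (A : Matrix m m R)
    (B : Matrix m n R) {D : Matrix n n R} (hD : D.PosDef) [Invertible D] :
    (fromBlocks A B Bᴴ D).PosDef ↔ (A - B * D⁻¹ * Bᴴ).PosDef := by
  classical
  have := Fintype.ofFinite m
  let U : Matrix (m ⊕ n) (m ⊕ n) R := fromBlocks 1 (B * D⁻¹) 0 1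
  have hU : IsUnit U := isUnit_fromBlocks_zero₂₁.2 ⟨isUnit_one, isUnit_one⟩
  have ldu : fromBlocks A B Bᴴ D = U * fromBlocks (A - B * D⁻¹ * Bᴴ) 0 0 D * star U := by
    simp [U, fromBlocks_eq_of_invertible₂₂ A B Bᴴ D, star_eq_conjTranspose,
      fromBlocks_conjTranspose, hD.isHermitian.inv.eq]
  rw [ldu, hU.posDef_star_right_conjugate_iff, posDef_fromBlocks_zero_zero_iff, and_iff_left hD]

end SchurComplement

section NegDef

variable {m n : Type*} [Fintype m] [Fintype n]

theorem negDef_iff_posDef_neg {M : Matrix n n ℝ} : NegDef M ↔ (-M).PosDef := by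
  simp [NegDef, posDef_iff_dotProduct_mulVec, IsSymm, IsHermitian, neg_mulVec]

theorem negDef_smul_iff {c : ℝ} (hc : 0 < c) {M : Matrix n n ℝ} : NegDef (c • M) ↔ NegDef M := by
  simp only [negDef_iff_posDef_neg, ← smul_neg]
  refine ⟨fun h => ?_, fun h => h.smul hc⟩
  simpa only [inv_smul_smul₀ hc.ne'] using h.smul (inv_pos.2 hc)

theorem negDef_fromBlocks_iff_schur [DecidableEq n] (P : Matrix m m ℝ)
    (Q : Matrix m n ℝ) {R : Matrix n n ℝ} (hR : R.PosDef) :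
    NegDef (fromBlocks P Q Qᵀ (-R)) ↔ NegDef (P + Q * R⁻¹ * Qᵀ) := by
  let _ := hR.isUnit.invertible
  have schur := posDef_fromBlocks_iff_schur (-P) (-Q) hR
  simp only [conjTranspose_eq_transpose_of_trivial] at schur
  rw [negDef_iff_posDef_neg, negDef_iff_posDef_neg, fromBlocks_neg, neg_neg, ← transpose_neg,
    schur]
  simp only [transpose_neg, Matrix.neg_mul, Matrix.mul_neg, neg_neg, neg_add, sub_eq_add_neg]

end NegDef

section Inverse

theorem inv_smul_of_ne_zero {K n : Type*} [Field K] [Fintype n] [DecidableEq n] {c : K}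
    (hc : c ≠ 0) {M : Matrix n n K} (hM : IsUnit M) : (c • M)⁻¹ = c⁻¹ • M⁻¹ :=
  inv_smul' M (Units.mk0 c hc) ((isUnit_iff_isUnit_det M).1 hM)

theorem inv_fromBlocks_zero_zero {R m n : Type*} [CommRing R] [Fintype m] [Fintype n]
    [DecidableEq m] [DecidableEq n] {P : Matrix m m R} {Q : Matrix n n R}
    (hPQ : IsUnit P ↔ IsUnit Q) : (fromBlocks P 0 0 Q)⁻¹ = fromBlocks P⁻¹ 0 0 Q⁻¹ := by
  simp [inv_fromBlocks_zero₂₁_of_isUnit_iff P 0 Q hPQ]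

variable {n : Type*} [Fintype n] [DecidableEq n]

theorem posDef_diagonal_mul_transpose {s : n → ℝ} (hs : ∀ i, s i ≠ 0) :
    (diagonal s * (diagonal s)ᵀ).PosDef := by
  simpa using fun i => mul_self_pos.2 (hs i)

theorem smul_inv_diagonal_mul_transpose {s : n → ℝ} (hs : ∀ i, s i ≠ 0) (c : ℝ) :
    c • (diagonal s * (diagonal s)ᵀ)⁻¹ = diagonal fun i => c * (s i)⁻¹ ^ 2 := by
  have hinv : (diagonal s * (diagonal s)ᵀ)⁻¹ = diagonal fun i => (s i)⁻¹ ^ 2 := by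
    refine inv_eq_right_inv ?_
    rw [diagonal_transpose, diagonal_mul_diagonal, diagonal_mul_diagonal, ← diagonal_one]
    congr 1
    ext i
    have := hs i
    field_simp
  rw [hinv, ← diagonal_smul]
  rfl

end Inverse

section Observer

variable {n d v w y z : Type*} [Fintype n] [Fintype z]

/-- The matrix whose negative definiteness, for some `X > 0`, is the bounded-real-lemma
certificate for the `H∞` norm of the system `ė = F e + G w`, `ε = C e` to be below `γ`. -/
def boundedRealMatrix [DecidableEq w] (F : Matrix n n ℝ) (G : Matrix n w ℝ) (C : Matrix z n ℝ)
    (γ : ℝ) (X : Matrix n n ℝ) : Matrix (n ⊕ w) (n ⊕ w) ℝ :=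
  fromBlocks (X * F + (X * F)ᵀ + Cᵀ * C) (X * G) (Gᵀ * X) (-(γ ^ 2 • (1 : Matrix w w ℝ)))

/-- The matrix of the observer design LMI in the unknowns `X` and `Y`, where `Y` stands for the
product of `X` and the observer gain; `B` and `D` already contain the disturbance scaling, and
`W` is the weight on the measurement noise channel. -/
def observerLMIMatrix [Fintype y] [DecidableEq d] [DecidableEq z] (A : Matrix n n ℝ)
    (Cy : Matrix y n ℝ) (Cz : Matrix z n ℝ) (B : Matrix n d ℝ) (D : Matrix y d ℝ)
    (W : Matrix y y ℝ) (γ : ℝ) (X : Matrix n n ℝ) (Y : Matrix n y ℝ) :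
    Matrix (n ⊕ d ⊕ z ⊕ y) (n ⊕ d ⊕ z ⊕ y) ℝ :=
  fromBlocks ((X * A + Y * Cy) + (X * A + Y * Cy)ᵀ)
    (fromCols (X * B + Y * D) (fromCols Czᵀ Y))
    (fromRows (X * B + Y * D)ᵀ (fromRows Cz Yᵀ))
    (fromBlocks (-(γ • (1 : Matrix d d ℝ))) 0 0
      (fromBlocks (-(γ • (1 : Matrix z z ℝ))) 0 0 (-W)))

/-- The Schur complement of the lower right block `-γ²` in `boundedRealMatrix F G C γ X`, for
symmetric `X` and `γ ≠ 0`. -/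
noncomputable def boundedRealRiccati [Fintype w] (F : Matrix n n ℝ) (G : Matrix n w ℝ)
    (C : Matrix z n ℝ) (γ : ℝ) (X : Matrix n n ℝ) : Matrix n n ℝ :=
  X * F + (X * F)ᵀ + Cᵀ * C + (γ ^ 2)⁻¹ • (X * G * (X * G)ᵀ)

/-- The Schur complement of the three lower diagonal blocks `-γ`, `-γ`, `-W` in
`observerLMIMatrix A Cy Cz B D W γ X Y`, for invertible `W` and `γ ≠ 0`. -/
noncomputable def observerRiccati [Fintype d] [Fintype y] [DecidableEq y] (A : Matrix n n ℝ)
    (Cy : Matrix y n ℝ) (Cz : Matrix z n ℝ) (B : Matrix n d ℝ) (D : Matrix y d ℝ)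
    (W : Matrix y y ℝ) (γ : ℝ) (X : Matrix n n ℝ) (Y : Matrix n y ℝ) : Matrix n n ℝ :=
  (X * A + Y * Cy) + (X * A + Y * Cy)ᵀ +
    (γ⁻¹ • ((X * B + Y * D) * (X * B + Y * D)ᵀ) + (γ⁻¹ • (Czᵀ * Cz) + Y * W⁻¹ * Yᵀ))

theorem negDef_boundedRealMatrix_iff [Fintype w] [DecidableEq w] (F : Matrix n n ℝ)
    (G : Matrix n w ℝ) (C : Matrix z n ℝ) {γ : ℝ} (hγ : γ ≠ 0) {X : Matrix n n ℝ}
    (hX : X.IsSymm) :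
    NegDef (boundedRealMatrix F G C γ X) ↔ NegDef (boundedRealRiccati F G C γ X) := by
  have hXG : Gᵀ * X = (X * G)ᵀ := by rw [transpose_mul, hX.eq]
  have hγ2 : 0 < γ ^ 2 := sq_pos_of_ne_zero hγ
  rw [boundedRealMatrix, hXG, negDef_fromBlocks_iff_schur _ _ (PosDef.one.smul hγ2),
    inv_smul_of_ne_zero hγ2.ne' isUnit_one, inv_one, Matrix.mul_smul, Matrix.mul_one,
    Matrix.smul_mul, boundedRealRiccati]

variable [Fintype d] [Fintype v] [Fintype y] [DecidableEq y]
variable (A : Matrix n n ℝ) (Cy : Matrix y n ℝ) (Cz : Matrix z n ℝ) (B : Matrix n d ℝ)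
  (D : Matrix y d ℝ) {γ : ℝ}

theorem negDef_observerLMIMatrix_iff [DecidableEq d] [DecidableEq z] (hγ : 0 < γ)
    {W : Matrix y y ℝ} (hW : W.PosDef) (X : Matrix n n ℝ) (Y : Matrix n y ℝ) :
    NegDef (observerLMIMatrix A Cy Cz B D W γ X Y) ↔
      NegDef (observerRiccati A Cy Cz B D W γ X Y) := by
  have hzW : (fromBlocks (γ • (1 : Matrix z z ℝ)) 0 0 W).PosDef :=
    posDef_fromBlocks_zero_zero_iff.2 ⟨PosDef.one.smul hγ, hW⟩
  have hdzW : (fromBlocks (γ • (1 : Matrix d d ℝ)) 0 0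
      (fromBlocks (γ • (1 : Matrix z z ℝ)) 0 0 W)).PosDef :=
    posDef_fromBlocks_zero_zero_iff.2 ⟨PosDef.one.smul hγ, hzW⟩
  have schur := negDef_fromBlocks_iff_schur ((X * A + Y * Cy) + (X * A + Y * Cy)ᵀ)
    (fromCols (X * B + Y * D) (fromCols Czᵀ Y)) hdzW
  rw [inv_fromBlocks_zero_zero (iff_of_true (PosDef.one.smul hγ).isUnit hzW.isUnit),
    inv_fromBlocks_zero_zero (iff_of_true (PosDef.one.smul hγ).isUnit hW.isUnit),
    inv_smul_of_ne_zero hγ.ne' isUnit_one, inv_smul_of_ne_zero hγ.ne' isUnit_one, inv_one,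
    inv_one] at schur
  simpa only [observerLMIMatrix, observerRiccati, fromBlocks_neg, neg_zero, transpose_fromCols,
    transpose_transpose, fromCols_mul_fromBlocks, fromCols_mul_fromRows, Matrix.mul_zero,
    add_zero, zero_add, Matrix.mul_smul, Matrix.mul_one, Matrix.smul_mul,
    fromCols_zero] using schur

theorem boundedRealRiccati_eq_smul_observerRiccati (hγ : γ ≠ 0) {S : Matrix y v ℝ}
    (hS : IsUnit (S * Sᵀ)) (X : Matrix n n ℝ) (L : Matrix n y ℝ) :
    boundedRealRiccati (A + L * Cy) (fromCols B 0 + L * fromCols D S) Cz γ (γ • X) =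
      γ • observerRiccati A Cy Cz B D (γ • (S * Sᵀ)⁻¹) γ X (X * L) := by
  have hF : X * (A + L * Cy) = X * A + X * L * Cy := by
    rw [Matrix.mul_add, Matrix.mul_assoc]
  have hG : X * (fromCols B 0 + L * fromCols D S) =
      fromCols (X * B + X * L * D) (X * L * S) := by
    rw [Matrix.mul_add, ← Matrix.mul_assoc, mul_fromCols, mul_fromCols, Matrix.mul_zero]
    ext i (j | j) <;> simp
  have hGG : (γ ^ 2)⁻¹ • ((γ • X) * (fromCols B 0 + L * fromCols D S) *
        ((γ • X) * (fromCols B 0 + L * fromCols D S))ᵀ) =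
      (X * B + X * L * D) * (X * B + X * L * D)ᵀ + X * L * S * (X * L * S)ᵀ := by
    rw [Matrix.smul_mul, hG, transpose_smul, Matrix.smul_mul, Matrix.mul_smul, smul_smul γ γ,
      ← sq, inv_smul_smul₀ (pow_ne_zero 2 hγ), transpose_fromCols, fromCols_mul_fromRows]
  have hW : X * L * (γ • (S * Sᵀ)⁻¹)⁻¹ * (X * L)ᵀ = γ⁻¹ • (X * L * S * (X * L * S)ᵀ) := by
    have hSdet : IsUnit (S * Sᵀ).det := (isUnit_iff_isUnit_det _).1 hS
    rw [inv_smul_of_ne_zero hγ (isUnit_nonsing_inv_iff.2 hS), nonsing_inv_nonsing_inv _ hSdet,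
      Matrix.mul_smul, Matrix.smul_mul, transpose_mul _ S]
    simp only [Matrix.mul_assoc]
  rw [boundedRealRiccati, observerRiccati, hGG, hW, Matrix.smul_mul, hF, transpose_smul]
  simp only [smul_add, smul_inv_smul₀ hγ]
  abel

theorem negDef_boundedRealMatrix_iff_observerLMIMatrix [DecidableEq d] [DecidableEq v]
    [DecidableEq z] (hγ : 0 < γ) {S : Matrix y v ℝ}
    (hS : (S * Sᵀ).PosDef) {X : Matrix n n ℝ} (hX : X.IsSymm) (L : Matrix n y ℝ) :
    NegDef (boundedRealMatrix (A + L * Cy) (fromCols B 0 + L * fromCols D S) Cz γ (γ • X)) ↔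
      NegDef (observerLMIMatrix A Cy Cz B D (γ • (S * Sᵀ)⁻¹) γ X (X * L)) := by
  rw [negDef_boundedRealMatrix_iff _ _ _ hγ.ne' (hX.smul γ),
    boundedRealRiccati_eq_smul_observerRiccati A Cy Cz B D hγ.ne' hS.isUnit,
    negDef_smul_iff hγ, ← negDef_observerLMIMatrix_iff A Cy Cz B D hγ (hS.inv.smul hγ)]

theorem negDef_boundedRealMatrix_of_observerLMIMatrix [DecidableEq n] [DecidableEq d]
    [DecidableEq v] [DecidableEq z] (hγ : 0 < γ) {S : Matrix y v ℝ} (hS : (S * Sᵀ).PosDef)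
    {X : Matrix n n ℝ} {Y : Matrix n y ℝ} (hX : X.PosDef)
    (h : NegDef (observerLMIMatrix A Cy Cz B D (γ • (S * Sᵀ)⁻¹) γ X Y)) :
    NegDef (boundedRealMatrix (A + X⁻¹ * Y * Cy) (fromCols B 0 + X⁻¹ * Y * fromCols D S) Cz γ
      (γ • X)) := by
  rwa [negDef_boundedRealMatrix_iff_observerLMIMatrix A Cy Cz B D hγ hS
      (isHermitian_iff_isSymm.1 hX.isHermitian),
    mul_nonsing_inv_cancel_left _ _ ((isUnit_iff_isUnit_det X).1 hX.isUnit)]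

theorem negDef_observerLMIMatrix_of_boundedRealMatrix [DecidableEq d] [DecidableEq v]
    [DecidableEq z] (hγ : 0 < γ) {S : Matrix y v ℝ} (hS : (S * Sᵀ).PosDef) {X : Matrix n n ℝ}
    {L : Matrix n y ℝ} (hX : X.IsSymm)
    (h : NegDef (boundedRealMatrix (A + L * Cy) (fromCols B 0 + L * fromCols D S) Cz γ X)) :
    NegDef (observerLMIMatrix A Cy Cz B D (γ • (S * Sᵀ)⁻¹) γ (γ⁻¹ • X) (γ⁻¹ • X * L)) := by
  rwa [← negDef_boundedRealMatrix_iff_observerLMIMatrix A Cy Cz B D hγ hS (hX.smul γ⁻¹),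
    smul_inv_smul₀ hγ.ne']

theorem hinf_observer_feasibility_general [DecidableEq n] [DecidableEq d] [DecidableEq v]
    [DecidableEq z] (hγ : 0 < γ) {S : Matrix y v ℝ}
    (hS : (S * Sᵀ).PosDef) :
    ((∃ (L : Matrix n y ℝ) (X : Matrix n n ℝ), X.PosDef ∧
        NegDef (boundedRealMatrix (A + L * Cy) (fromCols B 0 + L * fromCols D S) Cz γ X)) ↔
      ∃ (X : Matrix n n ℝ) (Y : Matrix n y ℝ), X.PosDef ∧
        NegDef (observerLMIMatrix A Cy Cz B D (γ • (S * Sᵀ)⁻¹) γ X Y)) ∧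
    ∀ (X : Matrix n n ℝ) (Y : Matrix n y ℝ), X.PosDef →
      NegDef (observerLMIMatrix A Cy Cz B D (γ • (S * Sᵀ)⁻¹) γ X Y) →
      ∃ X' : Matrix n n ℝ, X'.PosDef ∧
        NegDef (boundedRealMatrix (A + X⁻¹ * Y * Cy) (fromCols B 0 + X⁻¹ * Y * fromCols D S)
          Cz γ X') := by
  refine ⟨⟨?_, ?_⟩, fun X Y hX h => ⟨γ • X, hX.smul hγ,
    negDef_boundedRealMatrix_of_observerLMIMatrix A Cy Cz B D hγ hS hX h⟩⟩
  · rintro ⟨L, X, hX, h⟩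
    exact ⟨γ⁻¹ • X, γ⁻¹ • X * L, hX.smul (inv_pos.2 hγ),
      negDef_observerLMIMatrix_of_boundedRealMatrix A Cy Cz B D hγ hS
        (isHermitian_iff_isSymm.1 hX.isHermitian) h⟩
  · rintro ⟨X, Y, hX, h⟩
    exact ⟨X⁻¹ * Y, γ • X, hX.smul hγ,
      negDef_boundedRealMatrix_of_observerLMIMatrix A Cy Cz B D hγ hS hX h⟩

end Observer

/-- Feasibility content of Theorem 2 (sparse `H∞` observer design): feasibility of the
bounded-real-lemma inequality in `(X, L)` is equivalent to feasibility of the LMI (17)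
in `(X', Y')` with `β i = γ((S_n)ᵢᵢ)⁻²`; moreover `L = X'⁻¹ Y'` gives a valid
correspondence. -/
theorem hinf_observer_feasibility {n nd ny nz : ℕ}
    (A : Matrix (Fin n) (Fin n) ℝ) (Cy : Matrix (Fin ny) (Fin n) ℝ)
    (Cz : Matrix (Fin nz) (Fin n) ℝ) (Bd : Matrix (Fin n) (Fin nd) ℝ)
    (Dd : Matrix (Fin ny) (Fin nd) ℝ)
    (sd : Fin nd → ℝ) (sn : Fin ny → ℝ) (hsn : ∀ i, 0 < sn i)
    (Sd : Matrix (Fin nd) (Fin nd) ℝ) (Sn : Matrix (Fin ny) (Fin ny) ℝ)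
    (hSd : Sd = diagonal sd) (hSn : Sn = diagonal sn)
    (Bw : Matrix (Fin n) (Fin nd ⊕ Fin ny) ℝ) (Dw : Matrix (Fin ny) (Fin nd ⊕ Fin ny) ℝ)
    (hBw : Bw = fromCols (Bd * Sd) 0) (hDw : Dw = fromCols (Dd * Sd) Sn)
    (γ : ℝ) (hγ : 0 < γ)
    (β : Fin ny → ℝ) (hβ : ∀ i, β i = γ * ((sn i)⁻¹) ^ 2) :
    ((∃ (L : Matrix (Fin n) (Fin ny) ℝ) (X : Matrix (Fin n) (Fin n) ℝ), X.PosDef ∧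
        NegDef (fromBlocks
          (X * (A + L * Cy) + (X * (A + L * Cy))ᵀ + Czᵀ * Cz)
          (X * (Bw + L * Dw))
          ((Bw + L * Dw)ᵀ * X)
          (-(γ ^ 2 • (1 : Matrix (Fin nd ⊕ Fin ny) (Fin nd ⊕ Fin ny) ℝ))))) ↔
      (∃ (X' : Matrix (Fin n) (Fin n) ℝ) (Y' : Matrix (Fin n) (Fin ny) ℝ), X'.PosDef ∧
        NegDef (fromBlocks
          ((X' * A + Y' * Cy) + (X' * A + Y' * Cy)ᵀ)
          (fromCols (X' * Bd * Sd + Y' * Dd * Sd) (fromCols Czᵀ Y'))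
          (fromRows (X' * Bd * Sd + Y' * Dd * Sd)ᵀ (fromRows Cz Y'ᵀ))
          (fromBlocks (-(γ • (1 : Matrix (Fin nd) (Fin nd) ℝ))) 0 0
            (fromBlocks (-(γ • (1 : Matrix (Fin nz) (Fin nz) ℝ))) 0 0
              (-(diagonal β)))))))
    ∧
    (∀ (X' : Matrix (Fin n) (Fin n) ℝ) (Y' : Matrix (Fin n) (Fin ny) ℝ), X'.PosDef →
      NegDef (fromBlocks
        ((X' * A + Y' * Cy) + (X' * A + Y' * Cy)ᵀ)
        (fromCols (X' * Bd * Sd + Y' * Dd * Sd) (fromCols Czᵀ Y'))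
        (fromRows (X' * Bd * Sd + Y' * Dd * Sd)ᵀ (fromRows Cz Y'ᵀ))
        (fromBlocks (-(γ • (1 : Matrix (Fin nd) (Fin nd) ℝ))) 0 0
          (fromBlocks (-(γ • (1 : Matrix (Fin nz) (Fin nz) ℝ))) 0 0
            (-(diagonal β))))) →
      ∃ X : Matrix (Fin n) (Fin n) ℝ, X.PosDef ∧
        NegDef (fromBlocks
          (X * (A + (X'⁻¹ * Y') * Cy) + (X * (A + (X'⁻¹ * Y') * Cy))ᵀ + Czᵀ * Cz)
          (X * (Bw + (X'⁻¹ * Y') * Dw))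
          ((Bw + (X'⁻¹ * Y') * Dw)ᵀ * X)
          (-(γ ^ 2 • (1 : Matrix (Fin nd ⊕ Fin ny) (Fin nd ⊕ Fin ny) ℝ))))) := by
  subst hSd hSn hBw hDw
  obtain rfl : β = fun i => γ * (sn i)⁻¹ ^ 2 := funext hβ
  simpa only [boundedRealMatrix, observerLMIMatrix, Matrix.mul_assoc,
    smul_inv_diagonal_mul_transpose fun i => (hsn i).ne'] using
    hinf_observer_feasibility_general A Cy Cz (Bd * diagonal sd) (Dd * diagonal sd) hγ
      (posDef_diagonal_mul_transpose fun i => (hsn i).ne')
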